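/- Let n : ℕ and let ⟨·,·⟩ denote the Minkowski bilinear form on ℝ^{n+1}. Suppose K, D, F, Γ : Fin (n+1) → ℝ satisfy ⟨K,K⟩ = −4, ⟨K,D⟩ = 0, ⟨D,D⟩ = 14, ⟨K,F⟩ = −2, ⟨D,F⟩ = 4, ⟨F,F⟩ = 0, ⟨K,Γ⟩ = 2, ⟨D,Γ⟩ = 4, ⟨F,Γ⟩ = 2 and ⟨Γ,Γ⟩ = 0. Then Γ = −K + F. -/

import Mathlib

/-- The Minkowski (Lorentzian) bilinear form on `ℝ^{n+1}`:
`⟨x, y⟩ = x 0 * y 0 - ∑_{i=1}^{n} x i * y i`. -/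
def mink (n : ℕ) (x y : Fin (n + 1) → ℝ) : ℝ :=
  x 0 * y 0 - ∑ i ∈ Finset.Ioi (0 : Fin (n + 1)), x i * y i

/-!
By Cauchy–Schwarz on the spatial coordinates, the Minkowski form is negative definite on the
orthogonal complement of a vector of positive square, so a null vector there vanishes (the Hodge
index argument). The vector `Γ + K - F` is orthogonal to each of `D`, `Γ`, `K`, `F`, hence also
null. The paper's positive vector is `K + D`, of square `10`; `D` alone serves as well.
-/

section Minkowski

variable {n : ℕ} {x y : Fin (n + 1) → ℝ}

theorem mink_comm (x y : Fin (n + 1) → ℝ) : mink n x y = mink n y x := by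
  simp only [mink, mul_comm]

theorem mink_add_right (x y z : Fin (n + 1) → ℝ) :
    mink n x (y + z) = mink n x y + mink n x z := by
  simp only [mink, Pi.add_apply, mul_add, Finset.sum_add_distrib]
  ring

theorem mink_sub_right (x y z : Fin (n + 1) → ℝ) :
    mink n x (y - z) = mink n x y - mink n x z := by
  simp only [mink, Pi.sub_apply, mul_sub, Finset.sum_sub_distrib]
  ring

theorem mink_self (x : Fin (n + 1) → ℝ) :
    mink n x x = x 0 ^ 2 - ∑ i ∈ Finset.Ioi 0, x i ^ 2 := by
  simp only [mink, sq]

theorem apply_zero_ne_zero_of_mink_self_pos (hx : 0 < mink n x x) : x 0 ≠ 0 := by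
  have hspatial : 0 ≤ ∑ i ∈ Finset.Ioi 0, x i ^ 2 := Finset.sum_nonneg fun i _ => sq_nonneg (x i)
  rw [mink_self] at hx
  exact sq_pos_iff.mp (by linarith)

theorem sum_sq_pos_of_mink_eq_zero (hx : x 0 ≠ 0) (hxy : mink n x y = 0) (hy : y ≠ 0) :
    0 < ∑ i ∈ Finset.Ioi 0, y i ^ 2 := by
  contrapose! hy
  have hspatial : ∀ i ∈ Finset.Ioi 0, y i = 0 := by
    have hsum := hy.antisymm (Finset.sum_nonneg fun i _ => sq_nonneg (y i))
    simpa only [Finset.sum_eq_zero_iff_of_nonneg fun i _ => sq_nonneg (y i), sq_eq_zero_iff]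
      using hsum
  have htime : y 0 = 0 := by
    rw [mink, Finset.sum_eq_zero fun i hi => by rw [hspatial i hi, mul_zero], sub_zero] at hxy
    exact (mul_eq_zero.mp hxy).resolve_left hx
  funext i
  rcases eq_or_ne i 0 with rfl | hi
  · exact htime
  · exact hspatial i (Finset.mem_Ioi.mpr (Fin.pos_iff_ne_zero.mpr hi))

theorem sq_mul_mink_self_le_of_mink_eq_zero (hxy : mink n x y = 0) :
    x 0 ^ 2 * mink n y y ≤ -(mink n x x * ∑ i ∈ Finset.Ioi 0, y i ^ 2) := by
  have htime : x 0 * y 0 = ∑ i ∈ Finset.Ioi 0, x i * y i := sub_eq_zero.mp hxy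
  calc x 0 ^ 2 * mink n y y
      = (∑ i ∈ Finset.Ioi 0, x i * y i) ^ 2 - x 0 ^ 2 * ∑ i ∈ Finset.Ioi 0, y i ^ 2 := by
        rw [mink_self, ← htime]; ring
    _ ≤ (∑ i ∈ Finset.Ioi 0, x i ^ 2) * (∑ i ∈ Finset.Ioi 0, y i ^ 2)
          - x 0 ^ 2 * ∑ i ∈ Finset.Ioi 0, y i ^ 2 :=
        sub_le_sub_right (Finset.sum_mul_sq_le_sq_mul_sq _ x y) _
    _ = -(mink n x x * ∑ i ∈ Finset.Ioi 0, y i ^ 2) := by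
        rw [mink_self]; ring

theorem mink_self_neg_of_mink_eq_zero (hx : 0 < mink n x x) (hxy : mink n x y = 0)
    (hy : y ≠ 0) : mink n y y < 0 := by
  have hx₀ : x 0 ≠ 0 := apply_zero_ne_zero_of_mink_self_pos hx
  have hprod : x 0 ^ 2 * mink n y y < 0 :=
    (sq_mul_mink_self_le_of_mink_eq_zero hxy).trans_lt
      (neg_neg_of_pos (mul_pos hx (sum_sq_pos_of_mink_eq_zero hx₀ hxy hy)))
  exact neg_of_mul_neg_right hprod (sq_nonneg (x 0))

theorem eq_zero_of_mink_self_eq_zero (hx : 0 < mink n x x) (hxy : mink n x y = 0)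
    (hy : mink n y y = 0) : y = 0 := by
  by_contra hne
  exact (mink_self_neg_of_mink_eq_zero hx hxy hne).ne hy

end Minkowski

/-- Proposition 3.7 (case k = 11, component of genus 2 and self-intersection 0):
`Γ₁ ≡ −K_W + F`. -/
theorem case11_genus2_component (n : ℕ) (K D F Γ : Fin (n + 1) → ℝ)
    (hKK : mink n K K = -4) (hKD : mink n K D = 0) (hDD : mink n D D = 14)
    (hKF : mink n K F = -2) (hDF : mink n D F = 4) (hFF : mink n F F = 0)
    (hKΓ : mink n K Γ = 2) (hDΓ : mink n D Γ = 4) (hFΓ : mink n F Γ = 2)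
    (hΓΓ : mink n Γ Γ = 0) :
    Γ = -K + F := by
  have hpair (z : Fin (n + 1) → ℝ) :
      mink n z (Γ + K - F) = mink n z Γ + mink n z K - mink n z F := by
    rw [mink_sub_right, mink_add_right]
  have hD : mink n D (Γ + K - F) = 0 := by
    rw [hpair, hDΓ, mink_comm D K, hKD, hDF]; norm_num
  have hΓ : mink n Γ (Γ + K - F) = 0 := by
    rw [hpair, hΓΓ, mink_comm Γ K, hKΓ, mink_comm Γ F, hFΓ]; norm_num
  have hK : mink n K (Γ + K - F) = 0 := by
    rw [hpair, hKΓ, hKK, hKF]; norm_num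
  have hF : mink n F (Γ + K - F) = 0 := by
    rw [hpair, hFΓ, mink_comm F K, hKF, hFF]; norm_num
  have hnull : mink n (Γ + K - F) (Γ + K - F) = 0 := by
    rw [hpair, mink_comm _ Γ, mink_comm _ K, mink_comm _ F, hΓ, hK, hF]; norm_num
  have hzero : Γ + K - F = 0 := eq_zero_of_mink_self_eq_zero (by rw [hDD]; norm_num) hD hnull
  linear_combination hzero
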